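/- Let ε ∈ (0, π/6) and let G = (V,E) be an ε-regular graph. If θ_ex(γ) < π/2 − ε for every straight path γ of G, then #S^⊥(s) = l(s) for every stratum s ∈ S(G). -/

import Mathlib

open scoped Real

noncomputable section

abbrev Pt : Type := EuclideanSpace ℝ (Fin 2)

/-- The clockwise angle in `[0, 2π)` between the vectors `u` and `v`. -/
noncomputable def cwAngle (u v : Pt) : ℝ :=
  let a := Complex.arg ((⟨u 0, u 1⟩ : ℂ) * (starRingEnd ℂ) (⟨v 0, v 1⟩ : ℂ))
  if a < 0 then a + 2 * π else a

/-- A graph with finitely many vertices in the plane and unordered pairs of distinct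
vertices as edges. -/
structure BondGraph where
  V : Set Pt
  finV : V.Finite
  E : Set (Sym2 Pt)
  not_diag : ∀ e ∈ E, ¬ e.IsDiag
  mem_V : ∀ e ∈ E, ∀ x ∈ e, x ∈ V

/-- The neighborhood `N(x, E)`. -/
def nbhd (G : BondGraph) (x : Pt) : Set Pt := {y | s(x, y) ∈ G.E}

/-- The degree `#N(x, E)`. -/
noncomputable def deg (G : BondGraph) (x : Pt) : ℕ := (nbhd G x).ncard

/-- The bond energy `F_bond(G) = Σ_{x ∈ V} (4 − #N(x,E))`. -/
noncomputable def Fbond (G : BondGraph) : ℤ := ∑ᶠ x ∈ G.V, ((4 : ℤ) - (deg G x : ℤ))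

def goodAngles (ε : ℝ) : Set ℝ :=
  Set.Icc (π / 2 - ε) (π / 2 + ε) ∪ Set.Icc (π - ε) (π + ε) ∪
    Set.Icc (3 * π / 2 - ε) (3 * π / 2 + ε)

/-- `ε`-regularity of a graph. -/
def EpsRegular (ε : ℝ) (G : BondGraph) : Prop :=
  (∀ x y : Pt, s(x, y) ∈ G.E → 1 - ε ≤ dist x y) ∧
  (∀ x y z : Pt, s(x, y) ∈ G.E → s(z, y) ∈ G.E → x ≠ z →
    cwAngle (x - y) (z - y) ∈ goodAngles ε)

/-- The `i`-th vertex of a path (with junk value `0` out of range). -/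
def nth (γ : List Pt) (i : ℕ) : Pt := γ.getD i 0

/-- The interior angle `θ_{i+2} = θ_{x_{i+2}, x_{i+1}, x_i}` of a path (`0`-based). -/
noncomputable def pathAngle (γ : List Pt) (i : ℕ) : ℝ :=
  cwAngle (nth γ (i + 2) - nth γ (i + 1)) (nth γ i - nth γ (i + 1))

/-- The list of (unordered) edges of a path. -/
def pathEdges (γ : List Pt) : List (Sym2 Pt) := (γ.zip γ.tail).map (fun p => s(p.1, p.2))

/-- A straight path of the graph `G`. -/
def IsStraightPath (ε : ℝ) (G : BondGraph) (γ : List Pt) : Prop :=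
  2 ≤ γ.length ∧
  (∀ x ∈ γ, x ∈ G.V) ∧
  γ.Chain' (fun a b => s(a, b) ∈ G.E) ∧
  (∀ i : ℕ, i + 2 < γ.length → pathAngle γ i ∈ Set.Icc (π - ε) (π + ε)) ∧
  (pathEdges γ).Nodup

/-- A path is closed if its first and last points coincide. -/
def IsClosedPath (γ : List Pt) : Prop := γ.head? = γ.getLast?

/-- The angle excess `θ_ex(γ)` of a path. -/
noncomputable def thetaEx (γ : List Pt) : ℝ :=
  ∑ i ∈ Finset.range (γ.length - 2), |pathAngle γ i - π|

/-- Two lists are identified if they agree up to reversal. -/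
def revSetoid : Setoid (List Pt) where
  r a b := a = b ∨ a = b.reverse
  iseqv := by
    constructor
    · intro a; exact Or.inl rfl
    · intro a b h
      rcases h with h | h
      · exact Or.inl h.symm
      · right; rw [h, List.reverse_reverse]
    · intro a b c hab hbc
      rcases hab with h | h <;> rcases hbc with h' | h' <;>
        simp [h, h', List.reverse_reverse]

/-- An (undirected) stratum: a list of points up to reversal. -/
def Stratum : Type := Quotient revSetoid

/-- The length `l(s)` of a stratum. -/
def Stratum.len : Stratum → ℕ :=
  Quotient.lift List.length (by rintro a b (rfl | rfl) <;> simp)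

/-- The set of vertices of a stratum. -/
def Stratum.verts : Stratum → Set Pt :=
  Quotient.lift (fun l => {x : Pt | x ∈ l}) (by
    rintro a b (rfl | rfl)
    · rfl
    · ext x; simp)

/-- `γ` is a subpath of `γ'`, up to reversal. -/
def SubPathUpToRev (γ γ' : List Pt) : Prop := γ <:+: γ' ∨ γ <:+: γ'.reverse

/-- A maximal straight path (maximal with respect to inclusion). -/
def IsMaximalStraight (ε : ℝ) (G : BondGraph) (γ : List Pt) : Prop :=
  IsStraightPath ε G γ ∧
    ∀ γ' : List Pt, IsStraightPath ε G γ' → SubPathUpToRev γ γ' →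
      (γ' = γ ∨ γ' = γ.reverse)

/-- `x ∈ V₂^π`: a vertex of degree two whose bond angle lies in `[π−ε, π+ε]`. -/
def V2pi (ε : ℝ) (G : BondGraph) (x : Pt) : Prop :=
  x ∈ G.V ∧ ∃ x₁ x₂ : Pt, x₁ ≠ x₂ ∧ nbhd G x = {x₁, x₂} ∧
    cwAngle (x₁ - x) (x₂ - x) ∈ Set.Icc (π - ε) (π + ε)

/-- The set of strata `S(G)`: maximal straight paths, together with the degenerate
one-point stratum `(x)` counted twice for `x ∈ V₀` and once for `x ∈ V₁ ∪ V₂^π`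
(the `Fin 2` tag realizes the multiplicity). -/
def strataSet (ε : ℝ) (G : BondGraph) : Set (Stratum × Fin 2) :=
  {p | ∃ γ : List Pt, IsMaximalStraight ε G γ ∧ p = (Quotient.mk revSetoid γ, 0)}
  ∪ {p | ∃ x ∈ G.V, deg G x = 0 ∧
      (p = (Quotient.mk revSetoid [x], 0) ∨ p = (Quotient.mk revSetoid [x], 1))}
  ∪ {p | ∃ x ∈ G.V, (deg G x = 1 ∨ V2pi ε G x) ∧ p = (Quotient.mk revSetoid [x], 0)}

/-- The set of orthogonal strata `S^⊥(s)`. -/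
def orthStrata (ε : ℝ) (G : BondGraph) (s : Stratum × Fin 2) : Set (Stratum × Fin 2) :=
  {s' | s' ∈ strataSet ε G ∧ s' ≠ s ∧ (Stratum.verts s.1 ∩ Stratum.verts s'.1).Nonempty}


/-- `Dir u α` says that `α` is a polar angle of the nonzero vector `u`. -/
def Dir (u : Pt) (α : ℝ) : Prop :=
  ∃ r : ℝ, 0 < r ∧ u 0 = r * Real.cos α ∧ u 1 = r * Real.sin α

theorem Dir.exists_of_ne_zero {u : Pt} (hu : u ≠ 0) : ∃ α, Dir u α := by
  have hz : (⟨u 0, u 1⟩ : ℂ) ≠ 0 := by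
    intro h
    apply hu
    have h0 := congrArg Complex.re h
    have h1 := congrArg Complex.im h
    ext i
    fin_cases i
    · simpa using h0
    · simpa using h1
  refine ⟨Complex.arg ⟨u 0, u 1⟩, ‖(⟨u 0, u 1⟩ : ℂ)‖, norm_pos_iff.mpr hz, ?_, ?_⟩
  · simp [Complex.norm_mul_cos_arg]
  · simp [Complex.norm_mul_sin_arg]

theorem Dir.ne_zero {u : Pt} {α : ℝ} (h : Dir u α) : u ≠ 0 := by
  rintro rfl
  obtain ⟨r, hr, h0, h1⟩ := h
  simp only [PiLp.zero_apply, zero_eq_mul, hr.ne', false_or] at h0 h1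
  have := Real.sin_sq_add_cos_sq α
  rw [h0, h1] at this
  norm_num at this

theorem Dir.neg {u : Pt} {α : ℝ} (h : Dir u α) : Dir (-u) (α + π) := by
  obtain ⟨r, hr, h0, h1⟩ := h
  exact ⟨r, hr, by simp [h0], by simp [h1]⟩

theorem Dir.add_int_mul_two_pi {u : Pt} {α : ℝ} (h : Dir u α) (k : ℤ) :
    Dir u (α + 2 * π * k) := by
  obtain ⟨r, hr, h0, h1⟩ := h
  refine ⟨r, hr, ?_, ?_⟩
  · rw [h0, mul_comm (2 * π), Real.cos_add_int_mul_two_pi]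
  · rw [h1, mul_comm (2 * π), Real.sin_add_int_mul_two_pi]

theorem cwAngle_nonneg (u v : Pt) : 0 ≤ cwAngle u v := by
  unfold cwAngle
  have := Complex.neg_pi_lt_arg ((⟨u 0, u 1⟩ : ℂ) * (starRingEnd ℂ) (⟨v 0, v 1⟩ : ℂ))
  have := Real.pi_pos
  dsimp only
  split_ifs <;> linarith

theorem cwAngle_lt_two_pi (u v : Pt) : cwAngle u v < 2 * π := by
  unfold cwAngle
  have := Complex.arg_le_pi ((⟨u 0, u 1⟩ : ℂ) * (starRingEnd ℂ) (⟨v 0, v 1⟩ : ℂ))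
  have := Real.pi_pos
  dsimp only
  split_ifs <;> linarith

theorem Dir.cwAngle_eq {u v : Pt} {α β : ℝ} (hu : Dir u α) (hv : Dir v β) :
    ∃ k : ℤ, cwAngle u v = α - β + 2 * π * k := by
  obtain ⟨r, hr, h0, h1⟩ := hu
  obtain ⟨q, hq, g0, g1⟩ := hv
  have hmul : (⟨u 0, u 1⟩ : ℂ) * (starRingEnd ℂ) (⟨v 0, v 1⟩ : ℂ) =
      ((r * q : ℝ) : ℂ) *
        (Complex.cos ((α - β : ℝ) : ℂ) + Complex.sin ((α - β : ℝ) : ℂ) * Complex.I) := by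
    rw [← Complex.ofReal_cos, ← Complex.ofReal_sin, Real.cos_sub, Real.sin_sub, h0, h1, g0, g1]
    apply Complex.ext <;>
      simp [-Complex.ofReal_cos, -Complex.ofReal_sin, -Complex.ofReal_sub] <;> ring
  unfold cwAngle
  rw [hmul, Complex.arg_mul_cos_add_sin_mul_I_eq_toIocMod (mul_pos hr hq), toIocMod]
  dsimp only
  split_ifs
  · refine ⟨1 - toIocDiv Real.two_pi_pos (-π) (α - β), ?_⟩
    push_cast
    rw [zsmul_eq_mul]
    ring
  · refine ⟨-toIocDiv Real.two_pi_pos (-π) (α - β), ?_⟩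
    push_cast
    rw [zsmul_eq_mul]
    ring

theorem Dir.eq_add_int_mul {u : Pt} {α β : ℝ} (h : Dir u α) (h' : Dir u β) :
    ∃ k : ℤ, β = α + 2 * π * k := by
  obtain ⟨k, hk⟩ := h.cwAngle_eq h
  obtain ⟨m, hm⟩ := h.cwAngle_eq h'
  refine ⟨m - k, ?_⟩
  push_cast
  linarith

/-- A positive combination of two plane vectors at angle less than `π` points between them;
the case of increasing polar angles. -/
theorem Dir.add_of_le {u v : Pt} {α β : ℝ} (hu : Dir u α) (hv : Dir v β) (hle : α ≤ β)
    (hlt : β - α < π) : ∃ φ, Dir (u + v) φ ∧ α ≤ φ ∧ φ ≤ β := by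
  obtain ⟨r, hr, h0, h1⟩ := hu
  obtain ⟨q, hq, g0, g1⟩ := hv
  have hcont : ContinuousOn
      (fun t => r * Real.sin (α - t) + q * Real.sin (β - t)) (Set.Icc α β) := by fun_prop
  have hs : 0 ≤ Real.sin (β - α) :=
    Real.sin_nonneg_of_nonneg_of_le_pi (by linarith) hlt.le
  obtain ⟨t, ⟨hαt, htβ⟩, ht⟩ := intermediate_value_Icc' hle hcont (show (0 : ℝ) ∈ _ by
    constructor
    · rw [show α - β = -(β - α) by ring, Real.sin_neg]
      simpa using mul_nonneg hr.le hs
    · simpa using mul_nonneg hq.le hs)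
  dsimp only at ht
  have hpos : 0 < r * Real.cos (α - t) + q * Real.cos (β - t) := by
    rw [show α - t = -(t - α) by ring, Real.sin_neg] at ht
    rw [show α - t = -(t - α) by ring, Real.cos_neg]
    rcases hαt.eq_or_lt with rfl | hαt
    · have hsin : Real.sin (β - α) = 0 := by simpa [hq.ne'] using ht
      have hβ : β - α = 0 := by
        by_contra hne
        exact (Real.sin_pos_of_pos_of_lt_pi (lt_of_le_of_ne (by linarith) (Ne.symm hne)) hlt).ne'
          hsin
      simp [hβ]
      positivity
    · have hsp : 0 < Real.sin (t - α) :=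
        Real.sin_pos_of_pos_of_lt_pi (by linarith) (by linarith)
      have hsum : 0 < Real.sin ((t - α) + (β - t)) :=
        Real.sin_pos_of_pos_of_lt_pi (by linarith) (by linarith)
      rw [Real.sin_add] at hsum
      have : (r * Real.cos (t - α) + q * Real.cos (β - t)) * Real.sin (t - α) =
          q * (Real.sin (t - α) * Real.cos (β - t) + Real.cos (t - α) * Real.sin (β - t)) := by
        linear_combination (-Real.cos (t - α)) * ht
      exact pos_of_mul_pos_left (this ▸ mul_pos hq hsum) hsp.le
  refine ⟨t, ⟨_, hpos, ?_, ?_⟩, hαt, htβ⟩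
  · have hα : α = (α - t) + t := by ring
    have hβ : β = (β - t) + t := by ring
    rw [PiLp.add_apply, h0, g0]
    conv_lhs => rw [hα, hβ, Real.cos_add, Real.cos_add]
    linear_combination (-Real.sin t) * ht
  · have hα : α = (α - t) + t := by ring
    have hβ : β = (β - t) + t := by ring
    rw [PiLp.add_apply, h1, g1]
    conv_lhs => rw [hα, hβ, Real.sin_add, Real.sin_add]
    linear_combination (Real.cos t) * ht

/-- A positive combination of two plane vectors at angle less than `π` points between them. -/
theorem Dir.add {u v : Pt} {α β : ℝ} (hu : Dir u α) (hv : Dir v β) (h : |α - β| < π) :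
    ∃ φ, Dir (u + v) φ ∧ |α - φ| + |φ - β| = |α - β| := by
  rcases le_total α β with hle | hle
  · obtain ⟨φ, hφ, h1, h2⟩ := hu.add_of_le hv hle (by rw [abs_lt] at h; linarith)
    refine ⟨φ, hφ, ?_⟩
    rw [abs_of_nonpos (by linarith), abs_of_nonpos (by linarith), abs_of_nonpos (by linarith)]
    ring
  · obtain ⟨φ, hφ, h1, h2⟩ := hv.add_of_le hu hle (by rw [abs_lt] at h; linarith)
    refine ⟨φ, by rwa [add_comm], ?_⟩
    rw [abs_of_nonneg (by linarith), abs_of_nonneg (by linarith), abs_of_nonneg (by linarith)]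
    ring

theorem pathAngle_cons (x : Pt) (l : List Pt) (i : ℕ) :
    pathAngle (x :: l) (i + 1) = pathAngle l i := by
  simp [pathAngle, nth]

theorem thetaEx_cons (x y z : Pt) (l : List Pt) :
    thetaEx (x :: y :: z :: l) = |cwAngle (z - y) (x - y) - π| + thetaEx (y :: z :: l) := by
  unfold thetaEx
  simp only [List.length_cons]
  rw [show l.length + 1 + 1 + 1 - 2 = l.length + 1 by omega,
    show l.length + 1 + 1 - 2 = l.length by omega, Finset.sum_range_succ', add_comm]
  simp only [pathAngle_cons]
  simp [pathAngle, nth]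

theorem thetaEx_nonneg (l : List Pt) : 0 ≤ thetaEx l :=
  Finset.sum_nonneg fun _ _ => abs_nonneg _

theorem thetaEx_le_append (l m : List Pt) : thetaEx l ≤ thetaEx (l ++ m) := by
  unfold thetaEx
  have hsub : Finset.range (l.length - 2) ⊆ Finset.range ((l ++ m).length - 2) := by
    intro i
    simp only [Finset.mem_range, List.length_append]
    omega
  refine le_trans (le_of_eq (Finset.sum_congr rfl fun i hi => ?_))
    (Finset.sum_le_sum_of_subset_of_nonneg hsub fun _ _ _ => abs_nonneg _)
  rw [Finset.mem_range] at hi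
  unfold pathAngle nth
  rw [List.getD_append _ _ _ _ (by omega), List.getD_append _ _ _ _ (by omega),
    List.getD_append _ _ _ _ (by omega)]

/-- The chord of a polygonal path with angle excess `t < π` has a polar angle lying, up to
total deviation `t`, between those of the first and the last edge. -/
theorem exists_dir_chord (l : List Pt) : ∀ (x y : Pt) (α : ℝ),
    (∀ a b : Pt, [a, b] <:+: x :: y :: l → a ≠ b) → thetaEx (x :: y :: l) < π →
    Dir (y - x) α → ∀ (m : List Pt) (p q : Pt), x :: y :: l = m ++ [p, q] →
    ∃ φ β, Dir (q - x) φ ∧ Dir (q - p) β ∧ |α - φ| + |φ - β| ≤ thetaEx (x :: y :: l) := by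
  induction l with
  | nil =>
    intro x y α _ _ hα m p q hm
    have : m = [] := by
      have := congrArg List.length hm
      simp only [List.length_cons, List.length_nil, List.length_append] at this
      exact List.length_eq_zero_iff.mp (by omega)
    subst this
    simp only [List.nil_append, List.cons.injEq, and_true] at hm
    obtain ⟨rfl, rfl⟩ := hm
    exact ⟨α, α, hα, hα, by simp [thetaEx]⟩
  | cons z l ih =>
    intro x y α hne hlt hα m p q hm
    obtain _ | ⟨x', m⟩ := m
    · simp at hm
    simp only [List.cons_append, List.cons.injEq] at hm
    obtain ⟨rfl, hm⟩ := hm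
    rw [thetaEx_cons] at hlt ⊢
    have hyz : z - y ≠ 0 := sub_ne_zero.mpr (hne y z ⟨[x], l, rfl⟩).symm
    obtain ⟨α₁, hα₁⟩ := Dir.exists_of_ne_zero hyz
    have hyx : Dir (x - y) (α + π) := by
      rw [← neg_sub]
      exact hα.neg
    obtain ⟨k, hk⟩ := hα₁.cwAngle_eq hyx
    have hα₂ := hα₁.add_int_mul_two_pi (k - 1)
    have hturn : cwAngle (z - y) (x - y) - π = α₁ + 2 * π * ((k - 1 : ℤ) : ℝ) - α := by
      rw [hk]
      push_cast
      ring
    rw [hturn] at hlt ⊢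
    set α₂ := α₁ + 2 * π * ((k - 1 : ℤ) : ℝ)
    obtain ⟨φ, β, hφ, hβ, hle⟩ := ih y z α₂
      (fun a b hab => hne a b (hab.trans (List.suffix_cons _ _).isInfix))
      (by linarith [abs_nonneg (α₂ - α)]) hα₂ m p q hm
    have htri : |α - φ| ≤ |α₂ - α| + |α₂ - φ| := by
      rw [abs_sub_comm α₂ α]
      exact abs_sub_le _ _ _
    have hnn := abs_nonneg (φ - β)
    obtain ⟨ψ, hψ, hsum⟩ := hα.add hφ (by linarith)
    refine ⟨ψ, β, ?_, hβ, ?_⟩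
    · rwa [show q - x = y - x + (q - y) by abel]
    · linarith [abs_sub_le ψ φ β]

/-- `x` and `z` are opposite neighbors of `y`: the bond angle they form lies in
`[π - ε, π + ε]`. -/
def Opp (ε : ℝ) (G : BondGraph) (y x z : Pt) : Prop :=
  s(y, x) ∈ G.E ∧ s(y, z) ∈ G.E ∧ cwAngle (z - y) (x - y) ∈ Set.Icc (π - ε) (π + ε)

section Local

variable {ε : ℝ} {G : BondGraph}

theorem BondGraph.ne_of_mem {x y : Pt} (h : s(x, y) ∈ G.E) : x ≠ y := by
  rintro rfl
  exact G.not_diag _ h rfl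

theorem BondGraph.exists_dir {x y : Pt} (h : s(x, y) ∈ G.E) : ∃ α, Dir (y - x) α :=
  Dir.exists_of_ne_zero (sub_ne_zero.mpr (G.ne_of_mem h).symm)

theorem Opp.symm (hε : ε < π / 6) {x y z : Pt} (h : Opp ε G y x z) : Opp ε G y z x := by
  obtain ⟨hx, hz, h1, h2⟩ := h
  refine ⟨hz, hx, ?_⟩
  obtain ⟨α, hα⟩ := G.exists_dir hx
  obtain ⟨β, hβ⟩ := G.exists_dir hz
  obtain ⟨k, hk⟩ := hα.cwAngle_eq hβ
  obtain ⟨m, hm⟩ := hβ.cwAngle_eq hα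
  have hlo := cwAngle_nonneg (x - y) (z - y)
  have hhi := cwAngle_lt_two_pi (x - y) (z - y)
  have hπ := Real.pi_pos
  have hkm : k + m = 1 := by
    have hsum : cwAngle (x - y) (z - y) + cwAngle (z - y) (x - y) = 2 * π * ((k + m : ℤ) : ℝ) := by
      rw [hk, hm]
      push_cast
      ring
    have h3 : (0 : ℝ) < ((k + m : ℤ) : ℝ) := by
      by_contra! hle
      nlinarith
    have h4 : ((k + m : ℤ) : ℝ) < 2 := by
      by_contra! hle
      nlinarith
    have h3 : 0 < k + m := by exact_mod_cast h3
    have h4 : k + m < 2 := by exact_mod_cast h4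
    omega
  have hkm' : (k : ℝ) + m = 1 := by exact_mod_cast hkm
  have : cwAngle (x - y) (z - y) = 2 * π - cwAngle (z - y) (x - y) := by
    linear_combination hk + hm + 2 * π * hkm'
  constructor <;> linarith

theorem Opp.ne (hε : ε < π / 6) {x y z : Pt} (h : Opp ε G y x z) : x ≠ z := by
  rintro rfl
  obtain ⟨hx, -, h1, h2⟩ := h
  obtain ⟨α, hα⟩ := G.exists_dir hx
  obtain ⟨k, hk⟩ := hα.cwAngle_eq hα
  have hπ := Real.pi_pos
  have h3 : (0 : ℝ) < k := by
    by_contra! hle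
    nlinarith
  have h4 : (k : ℝ) < 1 := by
    by_contra! hle
    nlinarith
  have h3 : 0 < k := by exact_mod_cast h3
  have h4 : k < 1 := by exact_mod_cast h4
  omega

/-- The polar angles of two different bonds at a vertex are at circular distance at least
`π / 2 - ε`. -/
theorem EpsRegular.le_abs_sub (hreg : EpsRegular ε G) {x y z : Pt}
    (hx : s(y, x) ∈ G.E) (hz : s(y, z) ∈ G.E) (hne : x ≠ z) {α β : ℝ}
    (hα : Dir (x - y) α) (hβ : Dir (z - y) β) : π / 2 - ε ≤ |α - β| := by
  obtain ⟨k, hk⟩ := hα.cwAngle_eq hβ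
  have hgood := hreg.2 x y z (by rwa [Sym2.eq_swap]) (by rwa [Sym2.eq_swap]) hne
  have hπ := Real.pi_pos
  have hlo : π / 2 - ε ≤ cwAngle (x - y) (z - y) := by
    rcases hgood with (h | h) | h <;> linarith [h.1]
  have hhi : cwAngle (x - y) (z - y) ≤ 3 * π / 2 + ε := by
    rcases hgood with (h | h) | h <;> linarith [h.2]
  rcases lt_or_ge 0 k with hk0 | hk0
  · have : (1 : ℝ) ≤ k := by exact_mod_cast hk0
    rw [abs_sub_comm]
    exact le_trans (by nlinarith) (le_abs_self _)
  · have : (k : ℝ) ≤ 0 := by exact_mod_cast hk0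
    exact le_trans (by nlinarith) (le_abs_self _)

theorem Opp.unique (hε : ε < π / 6) (hreg : EpsRegular ε G) {x y z w : Pt}
    (hz : Opp ε G y x z) (hw : Opp ε G y x w) : z = w := by
  by_contra hne
  obtain ⟨α, hα⟩ := G.exists_dir hz.1
  obtain ⟨β, hβ⟩ := G.exists_dir hz.2.1
  obtain ⟨β', hβ'⟩ := G.exists_dir hw.2.1
  obtain ⟨k, hk⟩ := hβ.cwAngle_eq hα
  obtain ⟨m, hm⟩ := hβ'.cwAngle_eq hα
  have h := hreg.le_abs_sub hz.2.1 hw.2.1 hne (hβ.add_int_mul_two_pi k)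
    (hβ'.add_int_mul_two_pi m)
  obtain ⟨h1, h2⟩ := hz.2.2
  obtain ⟨h3, h4⟩ := hw.2.2
  have h5 : |β + 2 * π * k - (β' + 2 * π * m)| ≤ 2 * ε := by
    rw [abs_le]
    constructor <;> linarith
  linarith

/-- Among three different bonds at a vertex, two are opposite. -/
theorem EpsRegular.exists_opp (hε : ε < π / 6) (hreg : EpsRegular ε G) {v x y z : Pt}
    (hx : s(v, x) ∈ G.E) (hy : s(v, y) ∈ G.E) (hz : s(v, z) ∈ G.E)
    (hxy : x ≠ y) (hyz : y ≠ z) (hzx : z ≠ x) :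
    Opp ε G v y x ∨ Opp ε G v z y ∨ Opp ε G v x z := by
  by_contra! hno
  obtain ⟨n1, n2, n3⟩ := hno
  obtain ⟨α, hα⟩ := G.exists_dir hx
  obtain ⟨β, hβ⟩ := G.exists_dir hy
  obtain ⟨γ, hγ⟩ := G.exists_dir hz
  obtain ⟨k, hk⟩ := hα.cwAngle_eq hβ
  obtain ⟨m, hm⟩ := hβ.cwAngle_eq hγ
  obtain ⟨n, hn⟩ := hγ.cwAngle_eq hα
  have hπ := Real.pi_pos
  have key : ∀ {a b : Pt}, s(v, a) ∈ G.E → s(v, b) ∈ G.E → a ≠ b → ¬ Opp ε G v b a →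
      (π / 3 < cwAngle (a - v) (b - v) ∧ cwAngle (a - v) (b - v) < 2 * π / 3) ∨
      (4 * π / 3 < cwAngle (a - v) (b - v) ∧ cwAngle (a - v) (b - v) < 5 * π / 3) := by
    intro a b ha hb hab hopp
    rcases hreg.2 a v b (by rwa [Sym2.eq_swap]) (by rwa [Sym2.eq_swap]) hab with (h | h) | h
    · left
      constructor <;> linarith [h.1, h.2]
    · exact absurd ⟨hb, ha, h⟩ hopp
    · right
      constructor <;> linarith [h.1, h.2]
  have hsum : cwAngle (x - v) (y - v) + cwAngle (y - v) (z - v) + cwAngle (z - v) (x - v) =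
      2 * π * ((k + m + n : ℤ) : ℝ) := by
    rw [hk, hm, hn]
    push_cast
    ring
  have hint : ((k + m + n : ℤ) : ℝ) ≤ 0 ∨ ((k + m + n : ℤ) : ℝ) = 1 ∨
      ((k + m + n : ℤ) : ℝ) = 2 ∨ 3 ≤ ((k + m + n : ℤ) : ℝ) := by
    have : k + m + n ≤ 0 ∨ k + m + n = 1 ∨ k + m + n = 2 ∨ 3 ≤ k + m + n := by omega
    exact_mod_cast this
  generalize ((k + m + n : ℤ) : ℝ) = N at hsum hint
  rcases key hx hy hxy n1 with h1 | h1 <;> rcases key hy hz hyz n2 with h2 | h2 <;>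
    rcases key hz hx hzx n3 with h3 | h3 <;> rcases hint with h | h | h | h <;>
    first
    | (subst h; linarith)
    | nlinarith

/-- Two polygonal paths of small angle excess with common endpoints share their first or last
edge. -/
theorem EpsRegular.not_two_chords (hε0 : 0 < ε) (hreg : EpsRegular ε G)
    {x y w p p' q : Pt} {l l' m m' : List Pt}
    (hl : ∀ a b : Pt, [a, b] <:+: x :: y :: l → s(a, b) ∈ G.E)
    (hl' : ∀ a b : Pt, [a, b] <:+: x :: w :: l' → s(a, b) ∈ G.E)
    (hex : thetaEx (x :: y :: l) < π / 2 - ε) (hex' : thetaEx (x :: w :: l') < π / 2 - ε)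
    (hm : x :: y :: l = m ++ [p, q]) (hm' : x :: w :: l' = m' ++ [p', q]) :
    y = w ∨ p = p' := by
  by_contra! hne
  have hπ := Real.pi_pos
  have hxy : s(x, y) ∈ G.E := hl x y ⟨[], l, rfl⟩
  have hxw : s(x, w) ∈ G.E := hl' x w ⟨[], l', rfl⟩
  have hpq : s(q, p) ∈ G.E := by
    rw [Sym2.eq_swap]
    exact hl p q ⟨m, [], by simp [hm]⟩
  have hpq' : s(q, p') ∈ G.E := by
    rw [Sym2.eq_swap]
    exact hl' p' q ⟨m', [], by simp [hm']⟩
  obtain ⟨α, hα⟩ := G.exists_dir hxy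
  obtain ⟨α', hα'⟩ := G.exists_dir hxw
  obtain ⟨φ, β, hφ, hβ, hle⟩ := exists_dir_chord l x y α
    (fun a b h => G.ne_of_mem (hl a b h)) (by linarith) hα m p q hm
  obtain ⟨φ', β', hφ', hβ', hle'⟩ := exists_dir_chord l' x w α'
    (fun a b h => G.ne_of_mem (hl' a b h)) (by linarith) hα' m' p' q hm'
  obtain ⟨k, rfl⟩ := hφ'.eq_add_int_mul hφ
  have hstart := hreg.le_abs_sub hxy hxw hne.1 hα (hα'.add_int_mul_two_pi k)
  have hneg := hβ.neg
  have hneg' := (hβ'.add_int_mul_two_pi k).neg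
  rw [neg_sub] at hneg hneg'
  have hend := hreg.le_abs_sub hpq hpq' hne.2 hneg hneg'
  have e1 := abs_sub_le α (φ' + 2 * π * k) (α' + 2 * π * k)
  have e2 := abs_sub_le (β + π) (φ' + 2 * π * k + π) (β' + 2 * π * k + π)
  simp only [add_sub_add_right_eq_sub] at e1 e2 hend
  rw [abs_sub_comm φ' α'] at e1
  rw [abs_sub_comm β (φ' + _)] at e2
  linarith

end Local

/-- Straight paths described by their consecutive pairs and triples of vertices, and without
repeated vertices. -/
structure IsSimpleStraight (ε : ℝ) (G : BondGraph) (γ : List Pt) : Prop where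
  two_le : 2 ≤ γ.length
  adj : ∀ x y, [x, y] <:+: γ → s(x, y) ∈ G.E
  opp : ∀ x y z, [x, y, z] <:+: γ → Opp ε G y x z
  nodup : γ.Nodup

section Lists

theorem nth_append_length (a b : List Pt) (i : ℕ) :
    nth (a ++ b) (a.length + i) = nth b i := by
  unfold nth
  rw [List.getD_append_right _ _ _ _ (by omega)]
  congr 1
  omega

theorem triple_infix_of_lt : ∀ (γ : List Pt) (i : ℕ), i + 2 < γ.length →
    [nth γ i, nth γ (i + 1), nth γ (i + 2)] <:+: γ
  | [], i, h => by simp at h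
  | x :: γ, 0, h => by
    obtain _ | ⟨y, _ | ⟨z, l⟩⟩ := γ
    · simp at h
    · simp at h
    · exact ⟨[], l, by simp [nth]⟩
  | x :: γ, i + 1, h => by
    have := triple_infix_of_lt γ i (by simp at h; omega)
    simpa [nth] using this.trans (List.suffix_cons x γ).isInfix

theorem isChain_of_forall_infix {R : Pt → Pt → Prop} :
    ∀ {γ : List Pt}, (∀ x y, [x, y] <:+: γ → R x y) → γ.IsChain R
  | [], _ => by simp
  | [x], _ => by simp
  | x :: y :: l, h => by
    rw [List.isChain_cons_cons]
    exact ⟨h x y ⟨[], l, rfl⟩, isChain_of_forall_infix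
      fun a b hab => h a b (hab.trans (List.suffix_cons _ _).isInfix)⟩

theorem pathEdges_cons_cons (x y : Pt) (l : List Pt) :
    pathEdges (x :: y :: l) = s(x, y) :: pathEdges (y :: l) := by
  simp [pathEdges]

theorem mem_of_mem_pathEdges {e : Sym2 Pt} {v : Pt} (hv : v ∈ e) :
    ∀ {l : List Pt}, e ∈ pathEdges l → v ∈ l
  | [], h => by simp [pathEdges] at h
  | [x], h => by simp [pathEdges] at h
  | x :: y :: l, h => by
    rw [pathEdges_cons_cons, List.mem_cons] at h
    rcases h with rfl | h
    · rcases Sym2.mem_iff.mp hv with rfl | rfl <;> simp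
    · exact List.mem_cons_of_mem _ (mem_of_mem_pathEdges hv h)

theorem nodup_pathEdges : ∀ {l : List Pt}, l.Nodup → (pathEdges l).Nodup
  | [], _ => by simp [pathEdges]
  | [x], _ => by simp [pathEdges]
  | x :: y :: l, h => by
    rw [pathEdges_cons_cons, List.nodup_cons]
    rw [List.nodup_cons] at h
    exact ⟨fun hmem => h.1 (mem_of_mem_pathEdges (Sym2.mem_mk_left x y) hmem),
      nodup_pathEdges h.2⟩

theorem exists_pair_infix {γ : List Pt} (h2 : 2 ≤ γ.length) {x : Pt} (hx : x ∈ γ) :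
    ∃ y, [x, y] <:+: γ ∨ [y, x] <:+: γ := by
  obtain ⟨a, b, rfl⟩ := List.append_of_mem hx
  obtain _ | ⟨y, b⟩ := b
  · obtain rfl | ⟨a, y, rfl⟩ := List.eq_nil_or_concat a
    · simp at h2
    · exact ⟨y, Or.inr ⟨a, [], by simp⟩⟩
  · exact ⟨y, Or.inl ⟨a, b, by simp⟩⟩

theorem pair_infix_reverse {γ : List Pt} {x y : Pt} (h : [x, y] <:+: γ) :
    [y, x] <:+: γ.reverse := by
  simpa using List.reverse_infix.mpr h

end Lists

section Paths

variable {ε : ℝ} {G : BondGraph}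

theorem IsSimpleStraight.reverse (hε : ε < π / 6) {γ : List Pt} (h : IsSimpleStraight ε G γ) :
    IsSimpleStraight ε G γ.reverse where
  two_le := by simpa using h.two_le
  adj x y hxy := by
    rw [Sym2.eq_swap]
    exact h.adj y x (by simpa using pair_infix_reverse hxy)
  opp x y z hxyz := (h.opp z y x (by simpa using List.reverse_infix.mpr hxyz)).symm hε
  nodup := by simpa using h.nodup

theorem IsSimpleStraight.of_infix {γ γ' : List Pt} (h : IsSimpleStraight ε G γ)
    (hinf : γ' <:+: γ) (h2 : 2 ≤ γ'.length) : IsSimpleStraight ε G γ' where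
  two_le := h2
  adj x y hxy := h.adj x y (hxy.trans hinf)
  opp x y z hxyz := h.opp x y z (hxyz.trans hinf)
  nodup := h.nodup.sublist hinf.sublist

theorem IsSimpleStraight.isStraightPath {γ : List Pt} (h : IsSimpleStraight ε G γ) :
    IsStraightPath ε G γ := by
  refine ⟨h.two_le, fun x hx => ?_, isChain_of_forall_infix h.adj, fun i hi =>
    (h.opp _ _ _ (triple_infix_of_lt γ i hi)).2.2, nodup_pathEdges h.nodup⟩
  obtain ⟨y, hy | hy⟩ := exists_pair_infix h.two_le hx
  · exact G.mem_V _ (h.adj _ _ hy) _ (Sym2.mem_mk_left _ _)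
  · exact G.mem_V _ (h.adj _ _ hy) _ (Sym2.mem_mk_right _ _)

theorem IsStraightPath.adj {γ : List Pt} (h : IsStraightPath ε G γ) {x y : Pt}
    (hxy : [x, y] <:+: γ) : s(x, y) ∈ G.E := by
  have := List.IsChain.infix h.2.2.1 hxy
  simpa using this

theorem IsStraightPath.opp {γ : List Pt} (h : IsStraightPath ε G γ) {x y z : Pt}
    (hxyz : [x, y, z] <:+: γ) : Opp ε G y x z := by
  have hyx : s(y, x) ∈ G.E := by
    rw [Sym2.eq_swap]
    exact h.adj (List.IsInfix.trans ⟨[], [z], rfl⟩ hxyz)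
  refine ⟨hyx, h.adj (List.IsInfix.trans ⟨[x], [], rfl⟩ hxyz), ?_⟩
  obtain ⟨a, b, rfl⟩ := hxyz
  have := h.2.2.2.1 a.length (by simp)
  unfold pathAngle at this
  rw [List.append_assoc, nth_append_length, nth_append_length] at this
  have h0 := nth_append_length a ([x, y, z] ++ b) 0
  rw [add_zero] at h0
  rw [h0] at this
  simpa [nth] using this

theorem IsStraightPath.tail {x : Pt} {γ : List Pt} (h : IsStraightPath ε G (x :: γ))
    (h2 : 2 ≤ γ.length) : IsStraightPath ε G γ := by
  obtain ⟨-, hV, hE, hang, hnd⟩ := h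
  refine ⟨h2, fun y hy => hV y (List.mem_cons_of_mem _ hy), List.IsChain.tail hE,
    fun i hi => ?_, ?_⟩
  · rw [← pathAngle_cons x]
    exact hang (i + 1) (by simp; omega)
  · obtain _ | ⟨y, l⟩ := γ
    · simp at h2
    · rw [pathEdges_cons_cons, List.nodup_cons] at hnd
      exact hnd.2

/-- Under the angle excess bound, straight paths do not visit a vertex twice. -/
theorem IsStraightPath.nodup (hε0 : 0 < ε)
    (hex : ∀ γ : List Pt, IsStraightPath ε G γ → thetaEx γ < π / 2 - ε) :
    ∀ {γ : List Pt}, IsStraightPath ε G γ → γ.Nodup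
  | [], h => by simp
  | [x], h => by simp
  | x :: y :: l, h => by
    have hxy : s(x, y) ∈ G.E := h.adj ⟨[], l, rfl⟩
    rw [List.nodup_cons]
    constructor
    · intro hx
      obtain ⟨a, b, hab⟩ := List.append_of_mem hx
      obtain _ | ⟨y', a⟩ := a
      · simp only [List.nil_append, List.cons.injEq] at hab
        exact G.ne_of_mem hxy hab.1.symm
      · simp only [List.cons_append, List.cons.injEq] at hab
        obtain ⟨rfl, rfl⟩ := hab
        have hπ := Real.pi_pos
        have hlt := hex _ h
        have hle := thetaEx_le_append (x :: y :: (a ++ [x])) b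
        simp only [List.cons_append, List.append_assoc, List.nil_append] at hle
        obtain ⟨α, hα⟩ := G.exists_dir hxy
        obtain ⟨m, p, hm⟩ : ∃ m p, x :: y :: (a ++ [x]) = m ++ [p, x] := by
          obtain ⟨m, p, hmp⟩ := (List.eq_nil_or_concat (x :: y :: a)).resolve_left (by simp)
          exact ⟨m, p, by rw [← List.cons_append, ← List.cons_append, hmp]; simp⟩
        obtain ⟨φ, -, hφ, -⟩ := exists_dir_chord (a ++ [x]) x y α
          (fun c d hcd => G.ne_of_mem (h.adj (hcd.trans ⟨[], b, by simp⟩)))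
          (by linarith) hα m p x hm
        exact hφ.ne_zero (sub_self x)
    · obtain _ | ⟨z, l⟩ := l
      · simp
      · exact IsStraightPath.nodup hε0 hex (h.tail (by simp))

theorem IsStraightPath.isSimpleStraight (hε0 : 0 < ε)
    (hex : ∀ γ : List Pt, IsStraightPath ε G γ → thetaEx γ < π / 2 - ε)
    {γ : List Pt} (h : IsStraightPath ε G γ) : IsSimpleStraight ε G γ :=
  ⟨h.1, fun _ _ => h.adj, fun _ _ _ => h.opp, h.nodup hε0 hex⟩

theorem IsSimpleStraight.cons (hε : ε < π / 6) {x y z : Pt} {l : List Pt}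
    (h : IsSimpleStraight ε G (x :: y :: l)) (hz : Opp ε G x y z) :
    IsStraightPath ε G (z :: x :: y :: l) := by
  have hs := h.isStraightPath
  obtain ⟨-, hV, hE, hang, hnd⟩ := hs
  have hzx : s(z, x) ∈ G.E := by
    rw [Sym2.eq_swap]
    exact hz.2.1
  refine ⟨by simp, ?_, ?_, ?_, ?_⟩
  · intro v hv
    rcases List.mem_cons.mp hv with rfl | hv
    · exact G.mem_V _ hzx _ (Sym2.mem_mk_left _ _)
    · exact hV v hv
  · exact List.isChain_cons_cons.mpr ⟨hzx, hE⟩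
  · rintro (_ | i) hi
    · simpa [pathAngle, nth] using (hz.symm hε).2.2
    · rw [pathAngle_cons]
      exact hang i (by simpa using hi)
  · rw [pathEdges_cons_cons, List.nodup_cons]
    refine ⟨?_, hnd⟩
    rw [pathEdges_cons_cons, List.mem_cons, not_or]
    refine ⟨fun heq => ?_, fun hmem => ?_⟩
    · rw [Sym2.eq_swap, Sym2.congr_right] at heq
      exact hz.ne hε heq.symm
    · exact (List.nodup_cons.mp h.nodup).1 (mem_of_mem_pathEdges (Sym2.mem_mk_right z x) hmem)

end Paths

/-- The standing assumptions: `ε`-regularity and small angle excess of all straight paths. -/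
structure SmallExcess (ε : ℝ) (G : BondGraph) : Prop where
  pos : 0 < ε
  lt : ε < π / 6
  reg : EpsRegular ε G
  excess : ∀ γ : List Pt, IsStraightPath ε G γ → thetaEx γ < π / 2 - ε

/-- `Ray ε G x y l` says that `l` is the complete straight continuation of the directed bond from
`x` to `y`. -/
inductive Ray (ε : ℝ) (G : BondGraph) : Pt → Pt → List Pt → Prop
  | nil {x y : Pt} : (∀ z, ¬ Opp ε G y x z) → Ray ε G x y []
  | cons {x y z : Pt} {l : List Pt} : Opp ε G y x z → Ray ε G y z l → Ray ε G x y (z :: l)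

section Maximal

variable {ε : ℝ} {G : BondGraph}

theorem SmallExcess.simple (H : SmallExcess ε G) {γ : List Pt} (h : IsStraightPath ε G γ) :
    IsSimpleStraight ε G γ :=
  h.isSimpleStraight H.pos H.excess

theorem Ray.unique (H : SmallExcess ε G) {x y : Pt} {l l' : List Pt} (h : Ray ε G x y l)
    (h' : Ray ε G x y l') : l = l' := by
  induction h generalizing l' with
  | nil hno =>
    cases h' with
    | nil _ => rfl
    | cons hz _ => exact absurd hz (hno _)
  | cons hz _ ih =>
    cases h' with
    | nil hno => exact absurd hz (hno _)
    | cons hz' hr =>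
      obtain rfl := hz.unique H.lt H.reg hz'
      rw [ih hr]

theorem IsMaximalStraight.reverse (H : SmallExcess ε G) {γ : List Pt}
    (h : IsMaximalStraight ε G γ) : IsMaximalStraight ε G γ.reverse := by
  refine ⟨((H.simple h.1).reverse H.lt).isStraightPath, fun γ' hγ' hsub => ?_⟩
  have : SubPathUpToRev γ γ' := by
    rcases hsub with hsub | hsub
    · right
      simpa using List.reverse_infix.mpr hsub
    · left
      simpa using List.reverse_infix.mpr hsub
  rw [List.reverse_reverse]
  exact (h.2 γ' hγ' this).symm

theorem IsMaximalStraight.ray (H : SmallExcess ε G) {γ : List Pt}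
    (h : IsMaximalStraight ε G γ) {x y : Pt} {a b : List Pt} (hγ : γ = a ++ x :: y :: b) :
    Ray ε G x y b := by
  induction b generalizing a x y with
  | nil =>
    refine .nil fun z hz => ?_
    have hrev : γ.reverse = y :: x :: a.reverse := by simp [hγ]
    have hs := (H.simple h.1).reverse H.lt
    rw [hrev] at hs
    have hext := hs.cons H.lt hz
    rw [← hrev] at hext
    have hlen := h.2 _ hext (Or.inr ⟨[], [z], by simp⟩)
    rcases hlen with hlen | hlen <;> simpa using congrArg List.length hlen
  | cons z b ih =>
    refine .cons (h.1.opp ⟨a, b, by simp [hγ]⟩) (ih (a := a ++ [x]) (by simp [hγ]))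

theorem IsMaximalStraight.eq_of_pair (H : SmallExcess ε G) {γ γ' : List Pt}
    (h : IsMaximalStraight ε G γ) (h' : IsMaximalStraight ε G γ') {x y : Pt}
    (hxy : [x, y] <:+: γ) (hxy' : [x, y] <:+: γ') : γ = γ' := by
  obtain ⟨a, b, hab⟩ := hxy
  obtain ⟨a', b', hab'⟩ := hxy'
  have hb : b = b' := (h.ray H (a := a) (x := x) (y := y) (by simp [← hab])).unique H
    (h'.ray H (a := a') (by simp [← hab']))
  have ha : a.reverse = a'.reverse :=
    ((h.reverse H).ray H (a := b.reverse) (x := y) (y := x) (by simp [← hab])).unique H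
      ((h'.reverse H).ray H (a := b'.reverse) (by simp [← hab']))
  rw [List.reverse_inj] at ha
  rw [← hab, ← hab', ha, hb]

theorem SmallExcess.exists_maximal (H : SmallExcess ε G) {x y : Pt} (hxy : s(x, y) ∈ G.E) :
    ∃ γ, IsMaximalStraight ε G γ ∧ [x, y] <:+: γ := by
  classical
  let P : ℕ → Prop := fun n => ∃ γ, IsStraightPath ε G γ ∧ [x, y] <:+: γ ∧ γ.length = n
  have hbound : ∀ γ, IsStraightPath ε G γ → γ.length ≤ G.V.ncard := by
    intro γ hγ
    rw [← List.toFinset_card_of_nodup (H.simple hγ).nodup, ← Set.ncard_coe_finset]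
    exact Set.ncard_le_ncard (fun v hv => hγ.2.1 v (by simpa using hv)) G.finV
  have hpair : IsStraightPath ε G [x, y] := by
    refine ⟨le_rfl, ?_, List.isChain_pair.mpr hxy, fun i hi => by simp at hi, by simp [pathEdges]⟩
    intro v hv
    exact G.mem_V _ hxy v (by simpa using hv)
  have hP : P (Nat.findGreatest P G.V.ncard) :=
    Nat.findGreatest_spec (hbound _ hpair) ⟨_, hpair, List.infix_rfl, rfl⟩
  obtain ⟨γ, hγ, hinf, hlen⟩ := hP
  have hmax : ∀ γ', IsStraightPath ε G γ' → [x, y] <:+: γ' → γ'.length ≤ γ.length := by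
    intro γ' hγ' hinf'
    rw [hlen]
    exact Nat.le_findGreatest (hbound _ hγ') ⟨γ', hγ', hinf', rfl⟩
  refine ⟨γ, ⟨hγ, fun γ' hγ' hsub => ?_⟩, hinf⟩
  rcases hsub with hsub | hsub
  · exact Or.inl (hsub.eq_of_length_le (hmax γ' hγ' (hinf.trans hsub))).symm
  · right
    rw [hsub.eq_of_length_le (hmax _ ((H.simple hγ').reverse H.lt).isStraightPath
      (hinf.trans hsub)), List.reverse_reverse]

theorem append_cons_inj_of_nodup {a b c d : List Pt} {x : Pt} (hnd : (a ++ x :: b).Nodup)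
    (h : a ++ x :: b = c ++ x :: d) : a = c ∧ b = d := by
  have hmid := List.nodup_middle.mp hnd
  simp only [List.nodup_cons, List.mem_append, not_or] at hmid
  have := (List.append_cons_inj_of_notMem hmid.1.1 hmid.1.2).mp h
  exact ⟨this.1, this.2.2⟩

theorem mk_eq_mk_iff {γ γ' : List Pt} :
    (Quotient.mk revSetoid γ : Stratum) = Quotient.mk revSetoid γ' ↔ γ = γ' ∨ γ = γ'.reverse :=
  ⟨fun h => Quotient.exact h, fun h => Quotient.sound h⟩

/-- Two bonds at a vertex lie on the same maximal straight path if and only if they agree or are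
opposite. -/
theorem IsMaximalStraight.mk_eq_iff (H : SmallExcess ε G) {γ γ' : List Pt}
    (h : IsMaximalStraight ε G γ) (h' : IsMaximalStraight ε G γ') {x y z : Pt}
    (hxy : [x, y] <:+: γ) (hxz : [x, z] <:+: γ') :
    (Quotient.mk revSetoid γ : Stratum) = Quotient.mk revSetoid γ' ↔ y = z ∨ Opp ε G x y z := by
  rw [mk_eq_mk_iff]
  constructor
  · rintro (rfl | rfl)
    · left
      obtain ⟨a, b, hab⟩ := hxy
      obtain ⟨c, d, hcd⟩ := hxz
      have hnd := (H.simple h.1).nodup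
      simp only [List.append_assoc, List.cons_append, List.nil_append] at hab hcd
      rw [← hab] at hnd
      have := (append_cons_inj_of_nodup hnd (hab.trans hcd.symm)).2
      simp only [List.cons.injEq] at this
      exact this.1
    · right
      obtain ⟨a, b, hab⟩ := pair_infix_reverse hxy
      obtain ⟨c, d, hcd⟩ := hxz
      have hnd := (H.simple h'.1).nodup
      rw [List.reverse_reverse] at hab
      have hab2 : (a ++ [y]) ++ x :: b = γ' := by simpa using hab
      have hcd2 : c ++ x :: (z :: d) = γ' := by simpa using hcd
      rw [← hab2] at hnd
      have := (append_cons_inj_of_nodup hnd (hab2.trans hcd2.symm)).2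
      exact h'.1.opp ⟨a, d, by simp [← hab2, this]⟩
  · rintro (rfl | hopp)
    · exact Or.inl (h.eq_of_pair H h' hxy hxz)
    · right
      have hrev := h.reverse H
      obtain ⟨a, b, hab⟩ := pair_infix_reverse hxy
      have hray := hrev.ray H (a := a) (x := y) (y := x) (b := b) (by simp [← hab])
      have hz : [x, z] <:+: γ.reverse := by
        cases hray with
        | nil hno => exact absurd hopp (hno z)
        | @cons _ _ w l hw _ =>
          obtain rfl := hw.unique H.lt H.reg hopp
          exact ⟨a ++ [y], l, by simp [← hab]⟩
      rw [← hrev.eq_of_pair H h' hz hxz, List.reverse_reverse]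

theorem exists_infix_between {γ : List Pt} {x y : Pt} (hx : x ∈ γ) (hy : y ∈ γ) (hne : x ≠ y) :
    ∃ m, x :: (m ++ [y]) <:+: γ ∨ x :: (m ++ [y]) <:+: γ.reverse := by
  obtain ⟨a, b, rfl⟩ := List.append_of_mem hx
  rcases List.mem_append.mp hy with hy | hy
  · obtain ⟨c, d, rfl⟩ := List.append_of_mem hy
    exact ⟨d.reverse, Or.inr ⟨b.reverse, c.reverse, by simp⟩⟩
  · rcases List.mem_cons.mp hy with rfl | hy
    · exact absurd rfl hne
    · obtain ⟨c, d, rfl⟩ := List.append_of_mem hy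
      exact ⟨c, Or.inl ⟨a, d, by simp⟩⟩

/-- Two maximal straight paths running through two common vertices in the same order agree. -/
theorem IsMaximalStraight.eq_of_between (H : SmallExcess ε G) {γ γ' : List Pt}
    (h : IsMaximalStraight ε G γ) (h' : IsMaximalStraight ε G γ') {x q : Pt} {m m' : List Pt}
    (hm : x :: (m ++ [q]) <:+: γ) (hm' : x :: (m' ++ [q]) <:+: γ') : γ = γ' := by
  have key : ∀ m : List Pt, ∃ y l a p,
      x :: (m ++ [q]) = x :: y :: l ∧ x :: (m ++ [q]) = a ++ [p, q] := by
    intro m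
    obtain ⟨y, l, hyl⟩ := List.exists_cons_of_ne_nil (show m ++ [q] ≠ [] by simp)
    obtain ⟨a, p, hap⟩ := (List.eq_nil_or_concat (x :: m)).resolve_left (by simp)
    exact ⟨y, l, a, p, by rw [hyl], by rw [← List.cons_append, hap]; simp⟩
  have hs := (H.simple h.1).of_infix hm (by simp)
  have hs' := (H.simple h'.1).of_infix hm' (by simp)
  obtain ⟨y, l, a, p, h1, h2⟩ := key m
  obtain ⟨w, l', a', p', h1', h2'⟩ := key m'
  have hchord := H.reg.not_two_chords H.pos (l := l) (l' := l') (y := y) (w := w)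
    (h1 ▸ hs.adj) (h1' ▸ hs'.adj) (h1 ▸ H.excess _ hs.isStraightPath)
    (h1' ▸ H.excess _ hs'.isStraightPath) (h1.symm.trans h2) (h1'.symm.trans h2')
  rcases hchord with rfl | rfl
  · exact h.eq_of_pair H h' (x := x) (y := y)
      (List.IsInfix.trans ⟨[], l, by rw [h1]; simp⟩ hm)
      (List.IsInfix.trans ⟨[], l', by rw [h1']; simp⟩ hm')
  · exact h.eq_of_pair H h' (x := p) (y := q)
      (List.IsInfix.trans ⟨a, [], by rw [h2]; simp⟩ hm)
      (List.IsInfix.trans ⟨a', [], by rw [h2']; simp⟩ hm')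

theorem IsMaximalStraight.mk_eq_of_mem (H : SmallExcess ε G) {γ γ' : List Pt}
    (h : IsMaximalStraight ε G γ) (h' : IsMaximalStraight ε G γ') {x q : Pt} (hne : x ≠ q)
    (hx : x ∈ γ) (hq : q ∈ γ) (hx' : x ∈ γ') (hq' : q ∈ γ') :
    (Quotient.mk revSetoid γ : Stratum) = Quotient.mk revSetoid γ' := by
  rw [mk_eq_mk_iff]
  obtain ⟨m, hm | hm⟩ := exists_infix_between hx hq hne <;>
    obtain ⟨m', hm' | hm'⟩ := exists_infix_between hx' hq' hne
  · exact Or.inl (h.eq_of_between H h' hm hm')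
  · exact Or.inr (h.eq_of_between H (h'.reverse H) hm hm')
  · right
    rw [← (h.reverse H).eq_of_between H h' hm hm', List.reverse_reverse]
  · left
    exact List.reverse_injective ((h.reverse H).eq_of_between H (h'.reverse H) hm hm')

end Maximal

section Strata

variable {ε : ℝ} {G : BondGraph}

theorem finite_nbhd (x : Pt) : (nbhd G x).Finite :=
  G.finV.subset fun _ hy => G.mem_V _ hy _ (Sym2.mem_mk_right _ _)

/-- The strata through a vertex. -/
def strataAt (ε : ℝ) (G : BondGraph) (x : Pt) : Set (Stratum × Fin 2) :=
  {p | p ∈ strataSet ε G ∧ x ∈ Stratum.verts p.1}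

theorem mem_strataAt_iff (H : SmallExcess ε G) {x : Pt} (hx : x ∈ G.V) {p : Stratum × Fin 2} :
    p ∈ strataAt ε G x ↔
      (∃ γ y, IsMaximalStraight ε G γ ∧ [x, y] <:+: γ ∧ p = (Quotient.mk revSetoid γ, 0)) ∨
      (deg G x = 0 ∧ (p = (Quotient.mk revSetoid [x], 0) ∨ p = (Quotient.mk revSetoid [x], 1))) ∨
      ((deg G x = 1 ∨ V2pi ε G x) ∧ p = (Quotient.mk revSetoid [x], 0)) := by
  constructor
  · rintro ⟨(⟨γ, hγ, rfl⟩ | ⟨v, -, hdeg, rfl | rfl⟩) | ⟨v, -, hdeg, rfl⟩, hxp⟩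
    · left
      obtain ⟨y, hy | hy⟩ := exists_pair_infix hγ.1.1 hxp
      · exact ⟨γ, y, hγ, hy, rfl⟩
      · exact ⟨γ.reverse, y, hγ.reverse H, pair_infix_reverse hy,
          Prod.ext (mk_eq_mk_iff.mpr (Or.inr (by simp))) rfl⟩
    · obtain rfl := List.mem_singleton.mp hxp
      exact Or.inr (Or.inl ⟨hdeg, Or.inl rfl⟩)
    · obtain rfl := List.mem_singleton.mp hxp
      exact Or.inr (Or.inl ⟨hdeg, Or.inr rfl⟩)
    · obtain rfl := List.mem_singleton.mp hxp
      exact Or.inr (Or.inr ⟨hdeg, rfl⟩)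
  · rintro (⟨γ, y, hγ, hxy, rfl⟩ | ⟨hdeg, hp⟩ | ⟨hdeg, rfl⟩)
    · exact ⟨Or.inl (Or.inl ⟨γ, hγ, rfl⟩), hxy.subset (a := x) (by simp)⟩
    · refine ⟨Or.inl (Or.inr ⟨x, hx, hdeg, hp⟩), ?_⟩
      rcases hp with rfl | rfl <;> exact List.mem_singleton_self x
    · exact ⟨Or.inr ⟨x, hx, hdeg, rfl⟩, List.mem_singleton_self x⟩

/-- The bonds at a vertex form no, one or two classes of equal or opposite bonds. -/
theorem SmallExcess.bond_classes (H : SmallExcess ε G) {x : Pt} (hx : x ∈ G.V) :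
    nbhd G x = ∅ ∨
    (∃ y ∈ nbhd G x, (∀ z ∈ nbhd G x, y = z ∨ Opp ε G x y z) ∧ (deg G x = 1 ∨ V2pi ε G x)) ∨
    (∃ y ∈ nbhd G x, ∃ w ∈ nbhd G x, y ≠ w ∧ ¬ Opp ε G x y w ∧
      (∀ z ∈ nbhd G x, (y = z ∨ Opp ε G x y z) ∨ (w = z ∨ Opp ε G x w z)) ∧
      deg G x ≠ 0 ∧ ¬ (deg G x = 1 ∨ V2pi ε G x)) := by
  rcases (nbhd G x).eq_empty_or_nonempty with h0 | ⟨y, hy⟩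
  · exact Or.inl h0
  right
  by_cases hall : ∀ z ∈ nbhd G x, y = z ∨ Opp ε G x y z
  · left
    refine ⟨y, hy, hall, ?_⟩
    by_cases hone : ∃ z ∈ nbhd G x, y ≠ z
    · obtain ⟨z, hz, hyz⟩ := hone
      have hopp := (hall z hz).resolve_left hyz
      refine Or.inr ⟨hx, z, y, hyz.symm, ?_, hopp.2.2⟩
      ext v
      simp only [Set.mem_insert_iff, Set.mem_singleton_iff]
      constructor
      · intro hv
        rcases hall v hv with rfl | hv
        · exact Or.inr rfl
        · exact Or.inl (hv.unique H.lt H.reg hopp)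
      · rintro (rfl | rfl)
        · exact hz
        · exact hy
    · push Not at hone
      left
      rw [deg, Set.ncard_eq_one]
      exact ⟨y, Set.eq_singleton_iff_unique_mem.mpr ⟨hy, fun z hz => (hone z hz).symm⟩⟩
  · right
    push Not at hall
    obtain ⟨w, hw, hyw, hno⟩ := hall
    refine ⟨y, hy, w, hw, hyw, hno, fun z hz => ?_, ?_, ?_⟩
    · by_cases hyz : y = z
      · exact Or.inl (Or.inl hyz)
      by_cases hwz : w = z
      · exact Or.inr (Or.inl hwz)
      rcases H.reg.exists_opp H.lt hy hw hz hyw hwz (Ne.symm hyz) with h | h | h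
      · exact absurd (h.symm H.lt) hno
      · exact Or.inr (Or.inr (h.symm H.lt))
      · exact Or.inl (Or.inr h)
    · intro h0
      rw [deg, Set.ncard_eq_zero (finite_nbhd x)] at h0
      rw [h0] at hy
      exact hy
    · rintro (h1 | ⟨-, x₁, x₂, -, hnb, hang⟩)
      · obtain ⟨v, hv⟩ := Set.ncard_eq_one.mp h1
        rw [hv] at hy hw
        exact hyw (hy.trans hw.symm)
      · have h1 : x₁ ∈ nbhd G x := by simp [hnb]
        have h2 : x₂ ∈ nbhd G x := by simp [hnb]
        have hopp : Opp ε G x x₂ x₁ := ⟨h2, h1, hang⟩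
        rw [hnb] at hy hw
        rcases hy with rfl | rfl <;> rcases hw with rfl | rfl
        · exact hyw rfl
        · exact hno (hopp.symm H.lt)
        · exact hno hopp
        · exact hyw rfl

/-- Every vertex lies on exactly two strata. -/
theorem SmallExcess.ncard_strataAt (H : SmallExcess ε G) {x : Pt} (hx : x ∈ G.V) :
    (strataAt ε G x).ncard = 2 := by
  have hpt : ∀ {γ : List Pt}, IsMaximalStraight ε G γ →
      (Quotient.mk revSetoid γ : Stratum) ≠ Quotient.mk revSetoid [x] := by
    intro γ hγ heq
    have h2 := hγ.1.1
    have := congrArg Stratum.len heq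
    change γ.length = 1 at this
    omega
  have hnb : ∀ {γ : List Pt} {y : Pt}, IsMaximalStraight ε G γ → [x, y] <:+: γ →
      y ∈ nbhd G x := fun hγ hxy => hγ.1.adj hxy
  rw [Set.ncard_eq_two]
  rcases H.bond_classes hx with h0 | ⟨y, hy, hall, hdeg⟩ | ⟨y, hy, w, hw, hyw, hno, hall, hd0, hd1⟩
  · refine ⟨(Quotient.mk revSetoid [x], 0), (Quotient.mk revSetoid [x], 1),
      fun h => zero_ne_one (congrArg Prod.snd h), ?_⟩
    have hdeg : deg G x = 0 := by simp [deg, h0]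
    ext p
    rw [mem_strataAt_iff H hx]
    simp only [Set.mem_insert_iff, Set.mem_singleton_iff]
    constructor
    · rintro (⟨γ, y, hγ, hxy, -⟩ | ⟨-, hp⟩ | ⟨-, hp⟩)
      · have := hnb hγ hxy
        rw [h0] at this
        exact this.elim
      · exact hp
      · exact Or.inl hp
    · exact fun hp => Or.inr (Or.inl ⟨hdeg, hp⟩)
  · obtain ⟨γ, hγ, hxy⟩ := H.exists_maximal hy
    refine ⟨(Quotient.mk revSetoid γ, 0), (Quotient.mk revSetoid [x], 0),
      fun h => hpt hγ (congrArg Prod.fst h), ?_⟩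
    have hd0 : deg G x ≠ 0 := by
      rw [deg, Ne, Set.ncard_eq_zero (finite_nbhd x)]
      exact Set.Nonempty.ne_empty ⟨y, hy⟩
    ext p
    rw [mem_strataAt_iff H hx]
    simp only [Set.mem_insert_iff, Set.mem_singleton_iff]
    constructor
    · rintro (⟨γ', z, hγ', hxz, rfl⟩ | ⟨h, -⟩ | ⟨-, hp⟩)
      · left
        exact Prod.ext ((hγ.mk_eq_iff H hγ' hxy hxz).mpr (hall z (hnb hγ' hxz))).symm rfl
      · exact absurd h hd0
      · exact Or.inr hp
    · rintro (rfl | rfl)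
      · exact Or.inl ⟨γ, y, hγ, hxy, rfl⟩
      · exact Or.inr (Or.inr ⟨hdeg, rfl⟩)
  · obtain ⟨γ, hγ, hxy⟩ := H.exists_maximal hy
    obtain ⟨δ, hδ, hxw⟩ := H.exists_maximal hw
    refine ⟨(Quotient.mk revSetoid γ, 0), (Quotient.mk revSetoid δ, 0), fun h => ?_, ?_⟩
    · rcases (hγ.mk_eq_iff H hδ hxy hxw).mp (congrArg Prod.fst h) with h | h
      · exact hyw h
      · exact hno h
    ext p
    rw [mem_strataAt_iff H hx]
    simp only [Set.mem_insert_iff, Set.mem_singleton_iff]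
    constructor
    · rintro (⟨γ', z, hγ', hxz, rfl⟩ | ⟨h, -⟩ | ⟨h, -⟩)
      · rcases hall z (hnb hγ' hxz) with hz | hz
        · left
          exact Prod.ext ((hγ.mk_eq_iff H hγ' hxy hxz).mpr hz).symm rfl
        · right
          exact Prod.ext ((hδ.mk_eq_iff H hγ' hxw hxz).mpr hz).symm rfl
      · exact absurd h hd0
      · exact absurd h hd1
    · rintro (rfl | rfl)
      · exact Or.inl ⟨γ, y, hγ, hxy, rfl⟩
      · exact Or.inl ⟨δ, w, hδ, hxw, rfl⟩

/-- A stratum is either a maximal straight path or a single vertex. -/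
theorem exists_eq_mk_of_mem_strataSet {p : Stratum × Fin 2} (hp : p ∈ strataSet ε G) :
    (∃ γ, IsMaximalStraight ε G γ ∧ p = (Quotient.mk revSetoid γ, 0)) ∨
    (∃ x ∈ G.V, ∃ i, p = (Quotient.mk revSetoid [x], i)) := by
  rcases hp with (hp | ⟨x, hx, -, hp | hp⟩) | ⟨x, hx, -, hp⟩
  · exact Or.inl hp
  all_goals exact Or.inr ⟨x, hx, _, hp⟩

theorem SmallExcess.eq_of_mem_verts (H : SmallExcess ε G) {p q : Stratum × Fin 2}
    (hp : p ∈ strataSet ε G) (hq : q ∈ strataSet ε G) (hpq : p ≠ q) {x y : Pt}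
    (hxp : x ∈ Stratum.verts p.1) (hyp : y ∈ Stratum.verts p.1)
    (hxq : x ∈ Stratum.verts q.1) (hyq : y ∈ Stratum.verts q.1) : x = y := by
  rcases exists_eq_mk_of_mem_strataSet hp with ⟨γ, hγ, rfl⟩ | ⟨v, -, i, rfl⟩
  · rcases exists_eq_mk_of_mem_strataSet hq with ⟨δ, hδ, rfl⟩ | ⟨v, -, i, rfl⟩
    · by_contra hne
      exact hpq (Prod.ext (hγ.mk_eq_of_mem H hδ hne hxp hyp hxq hyq) rfl)
    · exact (List.mem_singleton.mp hxq).trans (List.mem_singleton.mp hyq).symm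
  · exact (List.mem_singleton.mp hxp).trans (List.mem_singleton.mp hyp).symm

theorem SmallExcess.verts_subset (H : SmallExcess ε G) {p : Stratum × Fin 2}
    (hp : p ∈ strataSet ε G) : Stratum.verts p.1 ⊆ G.V ∧
      (Stratum.verts p.1).ncard = Stratum.len p.1 := by
  classical
  have key : ∀ γ : List Pt, γ.Nodup → {x : Pt | x ∈ γ}.ncard = γ.length := by
    intro γ hγ
    rw [← List.toFinset_card_of_nodup hγ, ← Set.ncard_coe_finset]
    congr 1
    ext v
    simp
  rcases exists_eq_mk_of_mem_strataSet hp with ⟨γ, hγ, rfl⟩ | ⟨v, hv, i, rfl⟩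
  · exact ⟨hγ.1.2.1, key γ (H.simple hγ.1).nodup⟩
  · refine ⟨fun x hx => ?_, key [v] (by simp)⟩
    rwa [List.mem_singleton.mp hx]

end Strata

/-- **Lemma (small angle excess, (ii)).** If every straight path has angle excess less than
`π/2 − ε`, then `#S^⊥(s) = l(s)` for every stratum `s`. -/
theorem card_orth_strata (ε : ℝ) (hε0 : 0 < ε) (hε : ε < π / 6)
    (G : BondGraph) (hreg : EpsRegular ε G)
    (hex : ∀ γ : List Pt, IsStraightPath ε G γ → thetaEx γ < π / 2 - ε) :
    ∀ s ∈ strataSet ε G, (orthStrata ε G s).ncard = Stratum.len s.1 := by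
  intro s hs
  have H : SmallExcess ε G := ⟨hε0, hε, hreg, hex⟩
  obtain ⟨hV, hcard⟩ := H.verts_subset hs
  have hother : ∀ x ∈ Stratum.verts s.1, ∃ p, strataAt ε G x \ {s} = {p} := fun x hx => by
    have hsx : s ∈ strataAt ε G x := ⟨hs, hx⟩
    rw [← Set.ncard_eq_one, Set.ncard_sdiff_singleton_of_mem hsx, H.ncard_strataAt (hV hx)]
  have : Nonempty (Stratum × Fin 2) := ⟨s⟩
  choose! f hf using hother
  have hmem : ∀ x ∈ Stratum.verts s.1, f x ∈ strataAt ε G x \ {s} := fun x hx => by simp [hf x hx]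
  have himage : orthStrata ε G s = Set.image f (Stratum.verts s.1) := by
    ext p
    constructor
    · rintro ⟨hp, hne, x, hxs, hxp⟩
      have hpx : p ∈ strataAt ε G x \ {s} := ⟨⟨hp, hxp⟩, hne⟩
      rw [hf x hxs] at hpx
      exact ⟨x, hxs, hpx.symm⟩
    · rintro ⟨x, hxs, rfl⟩
      exact ⟨(hmem x hxs).1.1, (hmem x hxs).2, x, hxs, (hmem x hxs).1.2⟩
  rw [himage, Set.InjOn.ncard_image, hcard]
  intro x hx y hy hxy
  have hfy := hmem y hy
  rw [← hxy] at hfy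
  exact H.eq_of_mem_verts hs hfy.1.1 (Ne.symm hfy.2) hx hy (hmem x hx).1.2 hfy.1.2

end
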